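/- arXiv:2503.19200 — 2 statements merged into one kernel-verified Lean document; each statement's English description precedes it below -/
import Mathlib

section
/- (Proposition 1.) Fix A, B₁, B₂, gains K*_{1,k}, K*_{2,k}, weights Q₁, Q_{1,N}, R₁, horizon N, and initial state x₀. With A_{cl,k}, Φ, S_k, Λ_j as defined, suppose Player 2 applies u_{2,k} = −K*_{2,k}x_k + Δu_{2,k} while Player 1 applies u_{1,k} = −K*_{1,k}x_k, and let ΔJ₁ denote the resulting change in Player 1's cost relative to the nominal (Δu₂ ≡ 0) trajectory. Then there exists a constant C ≥ 0, depending only on A, B₁, B₂, the gains, the weights, N, and x₀ (but not on Δu₂), such that | ΔJ₁ − 2 Σ_{j=0}^{N−1} x₀ᵀ Λ_j B₂ Δu_{2,j} | ≤ C ‖Δu₂‖₂², where ‖Δu₂‖₂² := Σ_{j=0}^{N−1} ‖Δu_{2,j}‖². -/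
open Matrix Finset

noncomputable section

/-- Closed-loop matrix `A_{cl,k} = A - B₁K*_{1,k} - B₂K*_{2,k}`. -/
def Acl {n m1 m2 : ℕ} (A : Matrix (Fin n) (Fin n) ℝ)
    (B1 : Matrix (Fin n) (Fin m1) ℝ) (B2 : Matrix (Fin n) (Fin m2) ℝ)
    (K1 : ℕ → Matrix (Fin m1) (Fin n) ℝ) (K2 : ℕ → Matrix (Fin m2) (Fin n) ℝ)
    (k : ℕ) : Matrix (Fin n) (Fin n) ℝ :=
  A - B1 * K1 k - B2 * K2 k

/-- State-transition matrix `Φ(k,j) = A_{cl,k-1} ⋯ A_{cl,j}` (with `Φ(j,j) = I`). -/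
def Phi {n m1 m2 : ℕ} (A : Matrix (Fin n) (Fin n) ℝ)
    (B1 : Matrix (Fin n) (Fin m1) ℝ) (B2 : Matrix (Fin n) (Fin m2) ℝ)
    (K1 : ℕ → Matrix (Fin m1) (Fin n) ℝ) (K2 : ℕ → Matrix (Fin m2) (Fin n) ℝ)
    (k j : ℕ) : Matrix (Fin n) (Fin n) ℝ :=
  (((List.range' j (k - j)).map (fun i => Acl A B1 B2 K1 K2 i)).reverse).prod

/-- `S_k = Q₁ + K*_{1,k}ᵀ R₁ K*_{1,k}`. -/
def Smat {n m1 : ℕ} (Q1 : Matrix (Fin n) (Fin n) ℝ) (R1 : Matrix (Fin m1) (Fin m1) ℝ)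
    (K1 : ℕ → Matrix (Fin m1) (Fin n) ℝ) (k : ℕ) : Matrix (Fin n) (Fin n) ℝ :=
  Q1 + (K1 k)ᵀ * R1 * K1 k

/-- `Λ_j = Σ_{k=j+1}^{N-1} Φ(k,0)ᵀ S_k Φ(k,j+1) + Φ(N,0)ᵀ Q_{1,N} Φ(N,j+1)`. -/
def Lam {n m1 m2 : ℕ} (A : Matrix (Fin n) (Fin n) ℝ)
    (B1 : Matrix (Fin n) (Fin m1) ℝ) (B2 : Matrix (Fin n) (Fin m2) ℝ)
    (K1 : ℕ → Matrix (Fin m1) (Fin n) ℝ) (K2 : ℕ → Matrix (Fin m2) (Fin n) ℝ)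
    (Q1 Q1N : Matrix (Fin n) (Fin n) ℝ) (R1 : Matrix (Fin m1) (Fin m1) ℝ)
    (N j : ℕ) : Matrix (Fin n) (Fin n) ℝ :=
  (∑ k ∈ Finset.Ico (j + 1) N,
      (Phi A B1 B2 K1 K2 k 0)ᵀ * Smat Q1 R1 K1 k * Phi A B1 B2 K1 K2 k (j + 1))
    + (Phi A B1 B2 K1 K2 N 0)ᵀ * Q1N * Phi A B1 B2 K1 K2 N (j + 1)

/-- Perturbed trajectory: Player 1 applies `u₁ = -K*₁ x`, Player 2 applies
`u₂ = -K*₂ x + Δu`; the nominal trajectory is recovered for `Δu ≡ 0`. -/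
def traj {n m1 m2 : ℕ} (A : Matrix (Fin n) (Fin n) ℝ)
    (B1 : Matrix (Fin n) (Fin m1) ℝ) (B2 : Matrix (Fin n) (Fin m2) ℝ)
    (K1 : ℕ → Matrix (Fin m1) (Fin n) ℝ) (K2 : ℕ → Matrix (Fin m2) (Fin n) ℝ)
    (x0 : Fin n → ℝ) (Δu : ℕ → Fin m2 → ℝ) : ℕ → Fin n → ℝ
  | 0 => x0
  | k + 1 =>
      A.mulVec (traj A B1 B2 K1 K2 x0 Δu k)
        + B1.mulVec (-(K1 k).mulVec (traj A B1 B2 K1 K2 x0 Δu k))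
        + B2.mulVec (-(K2 k).mulVec (traj A B1 B2 K1 K2 x0 Δu k) + Δu k)

/-- Player 1's finite-horizon cost along a trajectory `x` with its feedback law
`u₁,k = -K*_{1,k} x_k`. -/
def cost1 {n m1 : ℕ} (Q1 Q1N : Matrix (Fin n) (Fin n) ℝ)
    (R1 : Matrix (Fin m1) (Fin m1) ℝ) (K1 : ℕ → Matrix (Fin m1) (Fin n) ℝ)
    (N : ℕ) (x : ℕ → Fin n → ℝ) : ℝ :=
  (∑ k ∈ Finset.range N,
      (x k ⬝ᵥ Q1.mulVec (x k)
        + (-(K1 k).mulVec (x k)) ⬝ᵥ R1.mulVec (-(K1 k).mulVec (x k))))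
    + x N ⬝ᵥ Q1N.mulVec (x N)

/-!
The state is affine in the deviation: it is the nominal trajectory plus the response `e` to the
deviation started from rest. The cost is a quadratic form with symmetric weights, so its expansion
around the nominal trajectory has a cross term, which is exactly the claimed linear term after
exchanging the sums over the time of the input and the time of the cost, and a remainder, which is
exactly the cost of `e`. Since `e` is linear in finitely many inputs, that cost is quadratically
bounded, for every deviation rather than only for small ones: hence `=O` along the filter `⊤`.
-/

open Asymptotics

section LinearAlgebra

variable {m n p q R : Type*} [Fintype m] [Fintype n] [Fintype p] [Fintype q] [CommSemiring R]

lemma mulVec_dotProduct_mulVec_mulVec (F : Matrix m p R) (M : Matrix m n R) (G : Matrix n q R)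
    (x : p → R) (y : q → R) :
    F *ᵥ x ⬝ᵥ M *ᵥ (G *ᵥ y) = x ⬝ᵥ (Fᵀ * M * G) *ᵥ y := by
  rw [Matrix.mul_assoc, ← mulVec_mulVec, dotProduct_transpose_mulVec, mulVec_mulVec,
    dotProduct_comm]

lemma dotProduct_mulVec_add_self {M : Matrix n n R} (hM : M.IsSymm) (x e : n → R) :
    (x + e) ⬝ᵥ M *ᵥ (x + e) = x ⬝ᵥ M *ᵥ x + 2 * (x ⬝ᵥ M *ᵥ e) + e ⬝ᵥ M *ᵥ e := by
  have hswap : e ⬝ᵥ M *ᵥ x = x ⬝ᵥ M *ᵥ e := by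
    rw [← dotProduct_transpose_mulVec, hM.eq]
  rw [mulVec_add, add_dotProduct, dotProduct_add, dotProduct_add, hswap]
  ring

end LinearAlgebra

section Asymptotics

variable {α m n R 𝕜 : Type*} [Fintype m] [Fintype n] [SeminormedRing R] [NormedDivisionRing 𝕜]
  {l : Filter α}

lemma isBigO_mulVec (M : Matrix m n R) (f : α → n → R) : (fun a => M *ᵥ f a) =O[l] f :=
  isBigO_pi.2 fun i =>
    .fun_sum fun j _ => (isBigO_pi.1 (isBigO_refl f l) j).const_mul_left (M i j)

lemma isBigO_dotProduct {f₁ f₂ : α → n → R} {g₁ g₂ : α → 𝕜} (h₁ : f₁ =O[l] g₁)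
    (h₂ : f₂ =O[l] g₂) : (fun a => f₁ a ⬝ᵥ f₂ a) =O[l] fun a => g₁ a * g₂ a :=
  .fun_sum fun i _ => (isBigO_pi.1 h₁ i).mul (isBigO_pi.1 h₂ i)

lemma isBigO_dotProduct_mulVec_self (M : Matrix n n R) {f : α → n → R} {g : α → 𝕜}
    (h : f =O[l] g) : (fun a => f a ⬝ᵥ M *ᵥ f a) =O[l] fun a => g a ^ 2 := by
  simpa only [sq] using isBigO_dotProduct h ((isBigO_mulVec M f).trans h)

end Asymptotics

section HorizonNorm

variable {ι : Type*} [Fintype ι]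

/-- The norm `‖u‖₂ = (Σ_{j<N} ‖u_j‖²)^{1/2}` of an input sequence over the horizon `N`. Inputs from
time `N` on are ignored, so on infinite sequences it is only a seminorm. -/
def horizonNorm (N : ℕ) (u : ℕ → ι → ℝ) : ℝ :=
  √(∑ j ∈ range N, u j ⬝ᵥ u j)

lemma sq_horizonNorm (N : ℕ) (u : ℕ → ι → ℝ) :
    horizonNorm N u ^ 2 = ∑ j ∈ range N, u j ⬝ᵥ u j :=
  Real.sq_sqrt <| sum_nonneg fun _ _ => sum_nonneg fun _ _ => mul_self_nonneg _

lemma abs_apply_le_horizonNorm {N j : ℕ} (hj : j < N) (u : ℕ → ι → ℝ) (i : ι) :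
    |u j i| ≤ horizonNorm N u := by
  refine Real.abs_le_sqrt ?_
  calc u j i ^ 2 = u j i * u j i := sq _
    _ ≤ u j ⬝ᵥ u j :=
      single_le_sum (f := fun i => u j i * u j i) (fun _ _ => mul_self_nonneg _) (mem_univ i)
    _ ≤ ∑ j ∈ range N, u j ⬝ᵥ u j :=
      single_le_sum (f := fun j => u j ⬝ᵥ u j)
        (fun _ _ => sum_nonneg fun _ _ => mul_self_nonneg _) (mem_range.2 hj)

lemma isBigO_apply_horizonNorm {N j : ℕ} (hj : j < N) :
    (fun u : ℕ → ι → ℝ => u j) =O[⊤] horizonNorm N :=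
  isBigO_pi.2 fun i => .of_norm_le fun u => abs_apply_le_horizonNorm hj u i

end HorizonNorm

section Trajectory

variable {n m1 m2 : ℕ} (A : Matrix (Fin n) (Fin n) ℝ)
  (B1 : Matrix (Fin n) (Fin m1) ℝ) (B2 : Matrix (Fin n) (Fin m2) ℝ)
  (K1 : ℕ → Matrix (Fin m1) (Fin n) ℝ) (K2 : ℕ → Matrix (Fin m2) (Fin n) ℝ)

lemma Phi_self (k : ℕ) : Phi A B1 B2 K1 K2 k k = 1 := by
  simp [Phi]

lemma Phi_succ {j k : ℕ} (h : j ≤ k) :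
    Phi A B1 B2 K1 K2 (k + 1) j = Acl A B1 B2 K1 K2 k * Phi A B1 B2 K1 K2 k j := by
  simp [Phi, Nat.succ_sub h, List.range'_1_concat, Nat.add_sub_cancel' h]

lemma traj_succ (x0 : Fin n → ℝ) (Δu : ℕ → Fin m2 → ℝ) (k : ℕ) :
    traj A B1 B2 K1 K2 x0 Δu (k + 1)
      = Acl A B1 B2 K1 K2 k *ᵥ traj A B1 B2 K1 K2 x0 Δu k + B2 *ᵥ Δu k := by
  simp only [traj, Acl, sub_mulVec, mulVec_add, mulVec_neg, mulVec_mulVec]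
  abel

lemma traj_eq_Phi_mulVec_add_sum (x0 : Fin n → ℝ) (Δu : ℕ → Fin m2 → ℝ) (k : ℕ) :
    traj A B1 B2 K1 K2 x0 Δu k
      = Phi A B1 B2 K1 K2 k 0 *ᵥ x0
        + ∑ j ∈ range k, (Phi A B1 B2 K1 K2 k (j + 1) * B2) *ᵥ Δu j := by
  induction k with
  | zero => simp [traj, Phi_self]
  | succ k ih =>
    have hPhi : ∀ j ∈ range k, (Phi A B1 B2 K1 K2 (k + 1) (j + 1) * B2) *ᵥ Δu j
        = Acl A B1 B2 K1 K2 k *ᵥ ((Phi A B1 B2 K1 K2 k (j + 1) * B2) *ᵥ Δu j) := fun j hj => by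
      rw [Phi_succ A B1 B2 K1 K2 (mem_range.1 hj), mulVec_mulVec, Matrix.mul_assoc]
    rw [traj_succ, ih, sum_range_succ, sum_congr rfl hPhi, Phi_self, Matrix.one_mul,
      Phi_succ A B1 B2 K1 K2 k.zero_le, mulVec_add, mulVec_sum, mulVec_mulVec, add_assoc]

lemma traj_zero_input (x0 : Fin n → ℝ) (k : ℕ) :
    traj A B1 B2 K1 K2 x0 (fun _ => 0) k = Phi A B1 B2 K1 K2 k 0 *ᵥ x0 := by
  simp [traj_eq_Phi_mulVec_add_sum]

lemma traj_zero_state (Δu : ℕ → Fin m2 → ℝ) (k : ℕ) :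
    traj A B1 B2 K1 K2 0 Δu k = ∑ j ∈ range k, (Phi A B1 B2 K1 K2 k (j + 1) * B2) *ᵥ Δu j := by
  simp [traj_eq_Phi_mulVec_add_sum]

lemma traj_eq_zero_input_add_zero_state (x0 : Fin n → ℝ) (Δu : ℕ → Fin m2 → ℝ) :
    traj A B1 B2 K1 K2 x0 Δu
      = traj A B1 B2 K1 K2 x0 (fun _ => 0) + traj A B1 B2 K1 K2 0 Δu := by
  funext k
  rw [Pi.add_apply, traj_zero_input, traj_zero_state, traj_eq_Phi_mulVec_add_sum]

lemma isBigO_traj_zero_state {k N : ℕ} (hk : k ≤ N) :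
    (fun Δu => traj A B1 B2 K1 K2 0 Δu k) =O[⊤] horizonNorm N := by
  simp only [traj_zero_state]
  exact .fun_sum fun j hj =>
    (isBigO_mulVec _ _).trans (isBigO_apply_horizonNorm ((mem_range.1 hj).trans_le hk))

lemma zero_input_dotProduct_mulVec_zero_state (M : Matrix (Fin n) (Fin n) ℝ) (x0 : Fin n → ℝ)
    (Δu : ℕ → Fin m2 → ℝ) (k : ℕ) :
    traj A B1 B2 K1 K2 x0 (fun _ => 0) k ⬝ᵥ M *ᵥ traj A B1 B2 K1 K2 0 Δu k
      = ∑ j ∈ range k, x0 ⬝ᵥ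
          ((Phi A B1 B2 K1 K2 k 0)ᵀ * M * Phi A B1 B2 K1 K2 k (j + 1) * B2) *ᵥ Δu j := by
  simp only [traj_zero_input, traj_zero_state, mulVec_sum, dotProduct_sum,
    mulVec_dotProduct_mulVec_mulVec, Matrix.mul_assoc]

lemma sum_dotProduct_Lam_mulVec (Q1 Q1N : Matrix (Fin n) (Fin n) ℝ)
    (R1 : Matrix (Fin m1) (Fin m1) ℝ) (N : ℕ) (x0 : Fin n → ℝ) (Δu : ℕ → Fin m2 → ℝ) :
    ∑ j ∈ range N, x0 ⬝ᵥ (Lam A B1 B2 K1 K2 Q1 Q1N R1 N j * B2) *ᵥ Δu j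
      = ∑ k ∈ range N, traj A B1 B2 K1 K2 x0 (fun _ => 0) k ⬝ᵥ
            Smat Q1 R1 K1 k *ᵥ traj A B1 B2 K1 K2 0 Δu k
        + traj A B1 B2 K1 K2 x0 (fun _ => 0) N ⬝ᵥ Q1N *ᵥ traj A B1 B2 K1 K2 0 Δu N := by
  simp only [zero_input_dotProduct_mulVec_zero_state, Lam, Matrix.add_mul, add_mulVec,
    dotProduct_add, sum_add_distrib, Matrix.sum_mul, sum_mulVec, dotProduct_sum]
  refine congrArg (· + _) (sum_comm' fun j k => ?_)
  simp only [mem_range, mem_Ico]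
  omega

end Trajectory

section Cost

variable {n m1 : ℕ} {Q1 Q1N : Matrix (Fin n) (Fin n) ℝ} {R1 : Matrix (Fin m1) (Fin m1) ℝ}

lemma isSymm_Smat (hQ1 : Q1.IsSymm) (hR1 : R1.IsSymm) (K1 : ℕ → Matrix (Fin m1) (Fin n) ℝ)
    (k : ℕ) : (Smat Q1 R1 K1 k).IsSymm := by
  simp [Matrix.IsSymm, Smat, hQ1.eq, hR1.eq, Matrix.mul_assoc]

lemma cost1_eq_sum_Smat (Q1 Q1N : Matrix (Fin n) (Fin n) ℝ) (R1 : Matrix (Fin m1) (Fin m1) ℝ)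
    (K1 : ℕ → Matrix (Fin m1) (Fin n) ℝ) (N : ℕ) (x : ℕ → Fin n → ℝ) :
    cost1 Q1 Q1N R1 K1 N x
      = ∑ k ∈ range N, x k ⬝ᵥ Smat Q1 R1 K1 k *ᵥ x k + x N ⬝ᵥ Q1N *ᵥ x N := by
  simp only [cost1, Smat, add_mulVec, dotProduct_add, mulVec_neg, neg_dotProduct_neg,
    mulVec_dotProduct_mulVec_mulVec]

lemma cost1_add (hQ1 : Q1.IsSymm) (hQ1N : Q1N.IsSymm) (hR1 : R1.IsSymm)
    (K1 : ℕ → Matrix (Fin m1) (Fin n) ℝ) (N : ℕ) (x e : ℕ → Fin n → ℝ) :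
    cost1 Q1 Q1N R1 K1 N (x + e)
      = cost1 Q1 Q1N R1 K1 N x
        + 2 * (∑ k ∈ range N, x k ⬝ᵥ Smat Q1 R1 K1 k *ᵥ e k + x N ⬝ᵥ Q1N *ᵥ e N)
        + cost1 Q1 Q1N R1 K1 N e := by
  simp only [cost1_eq_sum_Smat, Pi.add_apply, dotProduct_mulVec_add_self hQ1N,
    dotProduct_mulVec_add_self (isSymm_Smat hQ1 hR1 K1 _), sum_add_distrib, ← mul_sum]
  ring

lemma isBigO_cost1 {α : Type*} {l : Filter α} {N : ℕ} {x : α → ℕ → Fin n → ℝ} {g : α → ℝ}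
    (Q1 Q1N : Matrix (Fin n) (Fin n) ℝ) (R1 : Matrix (Fin m1) (Fin m1) ℝ)
    (K1 : ℕ → Matrix (Fin m1) (Fin n) ℝ) (h : ∀ k ≤ N, (fun a => x a k) =O[l] g) :
    (fun a => cost1 Q1 Q1N R1 K1 N (x a)) =O[l] fun a => g a ^ 2 := by
  simp only [cost1_eq_sum_Smat]
  refine .add (.fun_sum fun k hk => ?_) (isBigO_dotProduct_mulVec_self Q1N (h N le_rfl))
  exact isBigO_dotProduct_mulVec_self (Smat Q1 R1 K1 k) (h k (mem_range.1 hk).le)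

end Cost

section Sensitivity

variable {n m1 m2 : ℕ} (N : ℕ) (A : Matrix (Fin n) (Fin n) ℝ)
  (B1 : Matrix (Fin n) (Fin m1) ℝ) (B2 : Matrix (Fin n) (Fin m2) ℝ)
  (K1 : ℕ → Matrix (Fin m1) (Fin n) ℝ) (K2 : ℕ → Matrix (Fin m2) (Fin n) ℝ)
  {Q1 Q1N : Matrix (Fin n) (Fin n) ℝ} {R1 : Matrix (Fin m1) (Fin m1) ℝ}

lemma cost1_traj_sub_sub_first_order (hQ1 : Q1.IsSymm) (hQ1N : Q1N.IsSymm) (hR1 : R1.IsSymm)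
    (x0 : Fin n → ℝ) (Δu : ℕ → Fin m2 → ℝ) :
    cost1 Q1 Q1N R1 K1 N (traj A B1 B2 K1 K2 x0 Δu)
        - cost1 Q1 Q1N R1 K1 N (traj A B1 B2 K1 K2 x0 (fun _ => 0))
        - 2 * ∑ j ∈ range N, x0 ⬝ᵥ (Lam A B1 B2 K1 K2 Q1 Q1N R1 N j * B2) *ᵥ Δu j
      = cost1 Q1 Q1N R1 K1 N (traj A B1 B2 K1 K2 0 Δu) := by
  rw [traj_eq_zero_input_add_zero_state, cost1_add hQ1 hQ1N hR1, sum_dotProduct_Lam_mulVec]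
  ring

theorem first_order_sensitivity_of_cost_general (hQ1 : Q1.IsSymm) (hQ1N : Q1N.IsSymm)
    (hR1 : R1.IsSymm) :
    ∃ C : ℝ, 0 ≤ C ∧ ∀ (x0 : Fin n → ℝ) (Δu : ℕ → Fin m2 → ℝ),
      |cost1 Q1 Q1N R1 K1 N (traj A B1 B2 K1 K2 x0 Δu)
          - cost1 Q1 Q1N R1 K1 N (traj A B1 B2 K1 K2 x0 (fun _ => 0))
          - 2 * ∑ j ∈ range N, x0 ⬝ᵥ (Lam A B1 B2 K1 K2 Q1 Q1N R1 N j * B2) *ᵥ Δu j|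
        ≤ C * ∑ j ∈ range N, Δu j ⬝ᵥ Δu j := by
  have hcost : (fun Δu => cost1 Q1 Q1N R1 K1 N (traj A B1 B2 K1 K2 0 Δu))
      =O[⊤] fun Δu => horizonNorm N Δu ^ 2 :=
    isBigO_cost1 Q1 Q1N R1 K1 fun _ hk => isBigO_traj_zero_state A B1 B2 K1 K2 hk
  obtain ⟨C, hC, hbound⟩ := hcost.exists_nonneg
  refine ⟨C, hC, fun x0 Δu => ?_⟩
  rw [cost1_traj_sub_sub_first_order N A B1 B2 K1 K2 hQ1 hQ1N hR1, ← sq_horizonNorm]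
  simpa only [Real.norm_eq_abs, abs_sq] using Filter.eventually_top.1 hbound.bound Δu

end Sensitivity

/-- **Proposition 1.** There is a constant `C ≥ 0`, independent of the
deviations `Δu₂`, such that
`|ΔJ₁ - 2 Σ_{j<N} x₀ᵀ Λ_j B₂ Δu_{2,j}| ≤ C ‖Δu₂‖₂²`,
where `‖Δu₂‖₂² = Σ_{j<N} ‖Δu_{2,j}‖²`. -/
theorem first_order_sensitivity_of_cost
    {n m1 m2 : ℕ} (N : ℕ)
    (A : Matrix (Fin n) (Fin n) ℝ)
    (B1 : Matrix (Fin n) (Fin m1) ℝ) (B2 : Matrix (Fin n) (Fin m2) ℝ)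
    (K1 : ℕ → Matrix (Fin m1) (Fin n) ℝ) (K2 : ℕ → Matrix (Fin m2) (Fin n) ℝ)
    (Q1 Q1N : Matrix (Fin n) (Fin n) ℝ) (R1 : Matrix (Fin m1) (Fin m1) ℝ)
    (hQ1 : Q1.PosSemidef) (hQ1N : Q1N.PosSemidef) (hR1 : R1.PosDef)
    (x0 : Fin n → ℝ) :
    ∃ C : ℝ, 0 ≤ C ∧ ∀ Δu : ℕ → Fin m2 → ℝ,
      |cost1 Q1 Q1N R1 K1 N (traj A B1 B2 K1 K2 x0 Δu)
          - cost1 Q1 Q1N R1 K1 N (traj A B1 B2 K1 K2 x0 (fun _ => 0))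
          - 2 * ∑ j ∈ Finset.range N,
              x0 ⬝ᵥ (Lam A B1 B2 K1 K2 Q1 Q1N R1 N j * B2).mulVec (Δu j)|
        ≤ C * ∑ j ∈ Finset.range N, Δu j ⬝ᵥ Δu j := by
  obtain ⟨C, hC, hbound⟩ := first_order_sensitivity_of_cost_general N A B1 B2 K1 K2
    (isHermitian_iff_isSymm.1 hQ1.isHermitian) (isHermitian_iff_isSymm.1 hQ1N.isHermitian)
    (isHermitian_iff_isSymm.1 hR1.isHermitian)
  exact ⟨C, hC, hbound x0⟩

end
end

section
/- (Corollary 2, (1,2) Riccati block.) In the setting of the augmented Riccati recursion with Ā_k = [A_{eff,k}, I; 0, αI], B̄_k = [B₁; 0], Q̄ = diag(Q₁,0), Q̄_N = diag(Q_{1,N},0), write P^{xx}_k and P^{xw}_k for the upper-left and upper-right n×n blocks of the symmetric matrix P̄_k, and H_k := R₁ + B₁ᵀP^{xx}_{k+1}B₁ (assumed invertible). Then P^{xw}_N = 0 and for each k = N−1,…,0, P^{xw}_k = A_{eff,k}ᵀP^{xx}_{k+1} + α A_{eff,k}ᵀP^{xw}_{k+1} − A_{eff,k}ᵀP^{xx}_{k+1}B₁H_k⁻¹B₁ᵀ(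 P^{xx}_{k+1} + αP^{xw}_{k+1} ). -/
open Matrix Finset

/-!
Split the augmented state matrix into its block columns, `Ā = [Ā₁, Ā₂]`. The `(1,2)` block of a
Riccati step sees `Ā` only through `Ā₁ᵀ` on the left and `Ā₂` on the right. In the augmented
realization `Ā₁ = [A; 0]` and `B̄ = [B; 0]` vanish along the disturbance, so every product
`Ā₁ᵀ P [Y; Z]` or `B̄ᵀ P [Y; Z]` involves only the first block row `(Pˣˣ, Pˣʷ)` of `P`.
-/

section BlockProducts

variable {K ι κ ι' κ' μ ν : Type*}

theorem toBlocks₁₂_mul [NonUnitalNonAssocSemiring K] [Fintype μ] (M : Matrix (ι ⊕ κ) μ K)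
    (N : Matrix μ (ι' ⊕ κ') K) : (M * N).toBlocks₁₂ = M.toRows₁ * N.toCols₂ :=
  rfl

theorem transpose_fromRows_zero_mul_mul_fromRows [Semiring K] [Fintype ι] [Fintype κ]
    [Fintype ι'] [Fintype κ'] (X : Matrix ι μ K) (P : Matrix (ι ⊕ κ) (ι' ⊕ κ') K)
    (Y : Matrix ι' ν K) (Z : Matrix κ' ν K) :
    (fromRows X (0 : Matrix κ μ K))ᵀ * P * fromRows Y Z =
      Xᵀ * (P.toBlocks₁₁ * Y + P.toBlocks₁₂ * Z) := by
  conv_lhs => rw [← fromBlocks_toBlocks P]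
  rw [Matrix.mul_assoc, fromBlocks_mul_fromRows, transpose_fromRows, fromCols_mul_fromRows,
    transpose_zero, Matrix.zero_mul, add_zero]

end BlockProducts

section Riccati

variable {K ι κ μ : Type*} [CommRing K] [Fintype ι] [Fintype κ] [Fintype μ] [DecidableEq μ]

/-- One backward step of the discrete-time Riccati recursion of linear-quadratic control, with
state matrix `A`, input matrix `B`, state weight `Q`, input weight `R` and next value matrix `P`.
It is meaningful only when `R + Bᵀ * P * B` is invertible, as the inverse is `0` otherwise. -/
noncomputable def riccatiStep (A : Matrix ι ι K) (B : Matrix ι μ K) (Q : Matrix ι ι K)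
    (R : Matrix μ μ K) (P : Matrix ι ι K) : Matrix ι ι K :=
  Q + Aᵀ * P * A - Aᵀ * P * B * (R + Bᵀ * P * B)⁻¹ * Bᵀ * P * A

theorem toBlocks₁₂_riccatiStep (A : Matrix (ι ⊕ κ) (ι ⊕ κ) K) (B : Matrix (ι ⊕ κ) μ K)
    (Q : Matrix (ι ⊕ κ) (ι ⊕ κ) K) (R : Matrix μ μ K) (P : Matrix (ι ⊕ κ) (ι ⊕ κ) K) :
    (riccatiStep A B Q R P).toBlocks₁₂ =
      Q.toBlocks₁₂ + A.toCols₁ᵀ * P * A.toCols₂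
        - A.toCols₁ᵀ * P * B * (R + Bᵀ * P * B)⁻¹ * (Bᵀ * P * A.toCols₂) :=
  calc
    (riccatiStep A B Q R P).toBlocks₁₂ =
        Q.toBlocks₁₂ + (Aᵀ * P * A).toBlocks₁₂
          - (Aᵀ * P * B * (R + Bᵀ * P * B)⁻¹ * Bᵀ * P * A).toBlocks₁₂ := rfl
    _ = Q.toBlocks₁₂ + A.toCols₁ᵀ * P * A.toCols₂
          - A.toCols₁ᵀ * P * B * (R + Bᵀ * P * B)⁻¹ * Bᵀ * P * A.toCols₂ := by
      rw [toBlocks₁₂_mul, toBlocks₁₂_mul]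
      rfl
    _ = _ := by simp only [Matrix.mul_assoc]

theorem toBlocks₁₂_riccatiStep_fromBlocks (A : Matrix ι ι K) (E : Matrix ι κ K) (F : Matrix κ κ K)
    (B : Matrix ι μ K) (Q : Matrix (ι ⊕ κ) (ι ⊕ κ) K) (R : Matrix μ μ K)
    (P : Matrix (ι ⊕ κ) (ι ⊕ κ) K) :
    (riccatiStep (fromBlocks A E 0 F) (fromRows B 0) Q R P).toBlocks₁₂ =
      Q.toBlocks₁₂ + Aᵀ * (P.toBlocks₁₁ * E + P.toBlocks₁₂ * F)
        - Aᵀ * P.toBlocks₁₁ * B * (R + Bᵀ * P.toBlocks₁₁ * B)⁻¹ * Bᵀ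
            * (P.toBlocks₁₁ * E + P.toBlocks₁₂ * F) := by
  have hcols₁ : (fromBlocks A E 0 F).toCols₁ = fromRows A 0 := by
    rw [← fromCols_fromRows_eq_fromBlocks, toCols₁_fromCols]
  have hcols₂ : (fromBlocks A E 0 F).toCols₂ = fromRows E F := by
    rw [← fromCols_fromRows_eq_fromBlocks, toCols₂_fromCols]
  simp only [toBlocks₁₂_riccatiStep, hcols₁, hcols₂, transpose_fromRows_zero_mul_mul_fromRows,
    Matrix.mul_zero, add_zero]
  simp only [Matrix.mul_assoc]

theorem augmented_riccati_block_12_general (N : ℕ) (A : ℕ → Matrix ι ι K) (E : ℕ → Matrix ι κ K)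
    (F : ℕ → Matrix κ κ K) (B : ℕ → Matrix ι μ K) (Q : ℕ → Matrix ι ι K)
    (W : ℕ → Matrix κ κ K) (QN : Matrix ι ι K) (WN : Matrix κ κ K) (R : ℕ → Matrix μ μ K)
    (P : ℕ → Matrix (ι ⊕ κ) (ι ⊕ κ) K) (hPN : P N = fromBlocks QN 0 0 WN)
    (hP : ∀ k < N, P k =
      riccatiStep (fromBlocks (A k) (E k) 0 (F k)) (fromRows (B k) 0)
        (fromBlocks (Q k) 0 0 (W k)) (R k) (P (k + 1)))
    (_hinv : ∀ k < N, IsUnit (R k + (B k)ᵀ * (P (k + 1)).toBlocks₁₁ * B k)) :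
    (P N).toBlocks₁₂ = 0 ∧
    ∀ k < N,
      (P k).toBlocks₁₂
        = (A k)ᵀ * ((P (k + 1)).toBlocks₁₁ * E k + (P (k + 1)).toBlocks₁₂ * F k)
          - (A k)ᵀ * (P (k + 1)).toBlocks₁₁ * B k
              * (R k + (B k)ᵀ * (P (k + 1)).toBlocks₁₁ * B k)⁻¹
              * (B k)ᵀ * ((P (k + 1)).toBlocks₁₁ * E k + (P (k + 1)).toBlocks₁₂ * F k) := by
  refine ⟨by rw [hPN, toBlocks_fromBlocks₁₂], fun k hk => ?_⟩
  rw [hP k hk, toBlocks₁₂_riccatiStep_fromBlocks, toBlocks_fromBlocks₁₂, zero_add]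

end Riccati

/-- **Corollary 2, (1,2) Riccati block.** Under the slow-varying
augmented realization, the upper-right block `Pˣʷ_k` of the augmented Riccati
sequence satisfies `Pˣʷ_N = 0` and
`Pˣʷ_k = A_{eff,k}ᵀPˣˣ_{k+1} + α A_{eff,k}ᵀPˣʷ_{k+1}
  - A_{eff,k}ᵀPˣˣ_{k+1}B₁H_k⁻¹B₁ᵀ(Pˣˣ_{k+1} + αPˣʷ_{k+1})`,
where `H_k = R₁ + B₁ᵀPˣˣ_{k+1}B₁`. -/
theorem augmented_riccati_block_12
    {n m1 : ℕ} (N : ℕ)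
    (Aeff : ℕ → Matrix (Fin n) (Fin n) ℝ) (B1 : Matrix (Fin n) (Fin m1) ℝ)
    (Q1 Q1N : Matrix (Fin n) (Fin n) ℝ) (R1 : Matrix (Fin m1) (Fin m1) ℝ)
    (hR1 : R1.PosDef)
    (α : ℝ)
    (Abar : ℕ → Matrix (Fin n ⊕ Fin n) (Fin n ⊕ Fin n) ℝ)
    (hAbar : ∀ k, Abar k = Matrix.fromBlocks (Aeff k) 1 0 (α • (1 : Matrix (Fin n) (Fin n) ℝ)))
    (Bbar : Matrix (Fin n ⊕ Fin n) (Fin m1) ℝ)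
    (hBbar : Bbar = Matrix.fromRows B1 0)
    (Qbar QbarN : Matrix (Fin n ⊕ Fin n) (Fin n ⊕ Fin n) ℝ)
    (hQbar : Qbar = Matrix.fromBlocks Q1 0 0 0)
    (hQbarN : QbarN = Matrix.fromBlocks Q1N 0 0 0)
    (P : ℕ → Matrix (Fin n ⊕ Fin n) (Fin n ⊕ Fin n) ℝ)
    (hPN : P N = QbarN)
    (hP : ∀ k < N,
      P k = Qbar + (Abar k)ᵀ * P (k + 1) * Abar k
        - (Abar k)ᵀ * P (k + 1) * Bbar * (R1 + Bbarᵀ * P (k + 1) * Bbar)⁻¹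
            * Bbarᵀ * P (k + 1) * Abar k)
    (hPsymm : ∀ k ≤ N, (P k).IsSymm)
    (hinv : ∀ k < N, IsUnit (R1 + B1ᵀ * (P (k + 1)).toBlocks₁₁ * B1)) :
    (P N).toBlocks₁₂ = 0 ∧
    ∀ k < N,
      (P k).toBlocks₁₂
        = (Aeff k)ᵀ * (P (k + 1)).toBlocks₁₁
          + α • ((Aeff k)ᵀ * (P (k + 1)).toBlocks₁₂)
          - (Aeff k)ᵀ * (P (k + 1)).toBlocks₁₁ * B1
              * (R1 + B1ᵀ * (P (k + 1)).toBlocks₁₁ * B1)⁻¹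
              * B1ᵀ * ((P (k + 1)).toBlocks₁₁ + α • (P (k + 1)).toBlocks₁₂) := by
  obtain rfl : Abar = _ := funext hAbar
  subst hBbar hQbar hQbarN
  simpa [Matrix.mul_add] using
    augmented_riccati_block_12_general N Aeff (fun _ => 1) (fun _ => α • 1) (fun _ => B1)
      (fun _ => Q1) 0 Q1N 0 (fun _ => R1) P hPN hP hinv
end
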